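/- The matrix Z defined by Z_{ij} = √(π_j)·T_{ij}/√(π_i) is a symmetric real matrix: Z_{ij} = Z_{ji} for all i, j ∈ {0,...,N_w}. (Note each π_i > 0 under the stated parameter assumptions.) -/

import Mathlib

/-!
The chain is reversible with respect to the hypergeometric law `π`: it satisfies detailed balance
`T_{ij} π_j = T_{ji} π_i` (`TBL_detailed_balance`). As `π` is positive, dividing by
`√π_i √π_j` gives exactly the symmetry of `Z`. Since `T` is tridiagonal, detailed balance reduces to
`p_j π_j = q_{j+1} π_{j+1}` (`pBL_mul_piBL`), which is the absorption identity
`C(n, k+1) (k+1) = C(n, k) (n-k)` applied to each of the two binomial coefficients in `π`.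
-/

open Finset

noncomputable section

/-- Up-transition probability `p_j` of the BL model. -/
def pBL (N1 N2 Nw : ℕ) (j : ℕ) : ℝ :=
  ((N1 : ℝ) - j) * ((Nw : ℝ) - j) / ((N1 : ℝ) * N2)

/-- Down-transition probability `q_j` of the BL model. -/
def qBL (N1 N2 Nb : ℕ) (j : ℕ) : ℝ :=
  (j : ℝ) * ((Nb : ℝ) - N1 + j) / ((N1 : ℝ) * N2)

/-- The Bernoulli–Laplace transition matrix `T`. -/
def TBL (N1 N2 Nw Nb : ℕ) : Matrix (Fin (Nw + 1)) (Fin (Nw + 1)) ℝ :=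
  fun i j =>
    if (i : ℕ) = (j : ℕ) + 1 then pBL N1 N2 Nw j
    else if (i : ℕ) + 1 = (j : ℕ) then qBL N1 N2 Nb j
    else if (i : ℕ) = (j : ℕ) then 1 - pBL N1 N2 Nw j - qBL N1 N2 Nb j
    else 0

/-- The hypergeometric stationary distribution `π_i = C(Nw,i) C(N-Nw,N1-i) / C(N,N1)`. -/
def piBL (N1 Nw N : ℕ) (i : ℕ) : ℝ :=
  (Nat.choose Nw i : ℝ) * (Nat.choose (N - Nw) (N1 - i) : ℝ) / (Nat.choose N N1 : ℝ)

/-- Here `N1 ≤ N_b`, the form in which `N_w ≤ N2` enters, keeps `C(N_b, N1 - i)` from vanishing. -/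
lemma piBL_pos {N1 Nw Nb i : ℕ} (hb : N1 ≤ Nb) (hi : i ≤ Nw) :
    0 < piBL N1 Nw (Nw + Nb) i := by
  unfold piBL
  have h1 : 0 < Nat.choose Nw i := Nat.choose_pos hi
  have h2 : 0 < Nat.choose (Nw + Nb - Nw) (N1 - i) := Nat.choose_pos (by omega)
  have h3 : 0 < Nat.choose (Nw + Nb) N1 := Nat.choose_pos (by omega)
  positivity

lemma pBL_mul_piBL {N1 N2 Nw Nb j : ℕ} (hw1 : Nw ≤ N1) (hb : N1 ≤ Nb) (hj : j + 1 ≤ Nw) :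
    pBL N1 N2 Nw j * piBL N1 Nw (Nw + Nb) j
      = qBL N1 N2 Nb (j + 1) * piBL N1 Nw (Nw + Nb) (j + 1) := by
  -- `k = N1 - (j + 1)` avoids truncated subtraction in the second binomial coefficient.
  obtain ⟨k, rfl⟩ : ∃ k, N1 = k + 1 + j := ⟨N1 - (j + 1), by omega⟩
  have e1 : k + 1 + j - j = k + 1 := by omega
  have e2 : k + 1 + j - (j + 1) = k := by omega
  have a1 : (Nw.choose (j + 1) : ℝ) * (j + 1) = Nw.choose j * ((Nw : ℝ) - j) := by
    rw [← Nat.cast_sub (by omega)]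
    exact_mod_cast Nat.choose_succ_right_eq Nw j
  have a2 : (Nb.choose (k + 1) : ℝ) * (k + 1) = Nb.choose k * ((Nb : ℝ) - k) := by
    rw [← Nat.cast_sub (by omega)]
    exact_mod_cast Nat.choose_succ_right_eq Nb k
  simp only [pBL, qBL, piBL, e1, e2, Nat.add_sub_cancel_left]
  rw [div_mul_div_comm, div_mul_div_comm]
  congr 1
  push_cast
  linear_combination (-(Nb.choose k : ℝ) * (Nb - k)) * a1
    + ((Nw.choose j : ℝ) * (Nw - j)) * a2

/-- Detailed balance; `T` is column-stochastic, so `T_{ij}` is the probability of moving from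
`j` to `i`. -/
lemma TBL_detailed_balance {N1 N2 Nw Nb : ℕ} (hw1 : Nw ≤ N1) (hb : N1 ≤ Nb)
    (i j : Fin (Nw + 1)) :
    TBL N1 N2 Nw Nb i j * piBL N1 Nw (Nw + Nb) j
      = TBL N1 N2 Nw Nb j i * piBL N1 Nw (Nw + Nb) i := by
  have hi := i.isLt
  have hj := j.isLt
  by_cases h1 : (i : ℕ) = j + 1
  · have h := pBL_mul_piBL (N2 := N2) hw1 hb (j := j) (by omega)
    simpa [TBL, h1, show (j : ℕ) ≠ j + 1 + 1 by omega] using h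
  by_cases h2 : (j : ℕ) = i + 1
  · have h := pBL_mul_piBL (N2 := N2) hw1 hb (j := i) (by omega)
    simpa [TBL, h2, show (i : ℕ) ≠ i + 1 + 1 by omega] using h.symm
  by_cases h3 : i = j
  · rw [h3]
  · have h4 : (i : ℕ) ≠ j := fun h => h3 (Fin.ext h)
    simp [TBL, h1, h2, h4, Ne.symm h1, Ne.symm h2, h4.symm]

/-- The matrix `Z_{ij} = √(π_j) T_{ij} / √(π_i)` is symmetric. -/
theorem BL_symmetrized_matrix_symmetric
    (N1 N2 Nw Nb N : ℕ)
    (hN1 : 1 ≤ N1) (hN2 : 1 ≤ N2) (hN : N = N1 + N2) (hwb : Nw + Nb = N)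
    (hw1 : Nw ≤ N1) (hw2 : Nw ≤ N2)
    (i j : Fin (Nw + 1)) :
    Real.sqrt (piBL N1 Nw N j) * TBL N1 N2 Nw Nb i j / Real.sqrt (piBL N1 Nw N i)
      = Real.sqrt (piBL N1 Nw N i) * TBL N1 N2 Nw Nb j i / Real.sqrt (piBL N1 Nw N j) := by
  obtain rfl := hwb.symm
  have hb : N1 ≤ Nb := by omega
  have pi := piBL_pos hb (Nat.lt_succ_iff.mp i.isLt)
  have pj := piBL_pos hb (Nat.lt_succ_iff.mp j.isLt)
  rw [div_eq_div_iff (Real.sqrt_pos.mpr pi).ne' (Real.sqrt_pos.mpr pj).ne']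
  linear_combination TBL_detailed_balance (N2 := N2) hw1 hb i j
    + TBL N1 N2 Nw Nb i j * Real.mul_self_sqrt pj.le
    - TBL N1 N2 Nw Nb j i * Real.mul_self_sqrt pi.le
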